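/- Let 0 < r* < A and define E1(x) = ∫_x^∞ e^{−z}/z dz for x > 0 and f_0(R) = (1 − e^{1/r*}·E1(1/r*))·(R − A) + ∫_{1/A}^{1/R} E1(x)·(e^x/x) dx for R ∈ (0, A]. Then f_0 is twice continuously differentiable on (0, A), satisfies f_0′(R) + R²·f_0″(R) = e^{1/R}·E1(1/R) − e^{1/r*}·E1(1/r*) for every R ∈ (0, A), satisfies the boundary condition f_0(A) = 0, and is bounded on (0, A]. -/

import Mathlib

open MeasureTheory Real Set

/-- The exponential integral `E1 x = ∫_x^∞ e^{-z}/z dz`. -/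
noncomputable def E1 (x : ℝ) : ℝ := ∫ z in Set.Ioi x, Real.exp (-z) / z

/-!
Put `h x = e ^ x * E1 x` and `x = 1 / R`. Since `E1' x = -e ^ (-x) / x`, the function `h` solves
`h' x = h x - 1 / x`, hence `(x h)' = h + x h - 1`. The fundamental theorem of calculus gives
`f_0' = 1 - κ - x h`, where `κ = h (1 / r*)`; as `R² d/dR = -d/dx`, it follows that
`f_0' + R² f_0'' = (1 - κ - x h) + (h + x h - 1) = h - κ`.
The bound `E1 x ≤ e ^ (-x) / x` gives `h x / x ≤ 1 / x²`, whose integral from `1 / A` to `1 / R`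
is `A - R`.
-/

open scoped ContDiff Topology

section Calculus

lemma hasDerivAt_integral_Ioi {E : Type*} [NormedAddCommGroup E] [NormedSpace ℝ E]
    [CompleteSpace E] {f : ℝ → E} {a x : ℝ} (hf : IntegrableOn f (Ioi a)) (hax : a < x)
    (hfx : ContinuousAt f x) : HasDerivAt (fun y ↦ ∫ z in Ioi y, f z) (-f x) x := by
  have hint : ∀ {y}, a < y → IntegrableOn f (Ioi y) := fun hy ↦ hf.mono_set (Ioi_subset_Ioi hy.le)
  have hmeas : StronglyMeasurableAtFilter f (𝓝 x) :=
    ⟨Ioi a, Ioi_mem_nhds hax, hf.aestronglyMeasurable⟩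
  refine ((intervalIntegral.integral_hasDerivAt_right .refl hmeas hfx).const_sub
    (∫ z in Ioi x, f z)).congr_of_eventuallyEq ?_
  filter_upwards [Ioi_mem_nhds hax] with y hy
  rw [← intervalIntegral.integral_interval_add_Ioi (hint hax) (hint hy), add_sub_cancel_left]

lemma hasDerivAt_integral_of_continuousOn {E : Type*} [NormedAddCommGroup E] [NormedSpace ℝ E]
    [CompleteSpace E] {f : ℝ → E} {s : Set ℝ} {a x : ℝ} (hs : IsOpen s) (hs' : s.OrdConnected)
    (hf : ContinuousOn f s) (ha : a ∈ s) (hx : x ∈ s) :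
    HasDerivAt (fun y ↦ ∫ z in a..y, f z) (f x) x :=
  intervalIntegral.integral_hasDerivAt_right
    (hf.mono (hs'.uIcc_subset ha hx)).intervalIntegrable
    (hf.stronglyMeasurableAtFilter hs x hx) (hf.continuousAt (hs.mem_nhds hx))

lemma hasDerivAt_comp_one_div {𝕜 E : Type*} [NontriviallyNormedField 𝕜] [NormedAddCommGroup E]
    [NormedSpace 𝕜 E] {f : 𝕜 → E} {f' : E} {x : 𝕜} (hx : x ≠ 0) (hf : HasDerivAt f f' (1 / x)) :
    HasDerivAt (fun y ↦ f (1 / y)) (-(x ^ 2)⁻¹ • f') x := by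
  simp only [one_div] at hf ⊢
  exact hf.scomp x (hasDerivAt_inv hx)

lemma integral_inv_sq {a b : ℝ} (h : (0 : ℝ) ∉ uIcc a b) :
    ∫ x in a..b, (x ^ 2)⁻¹ = a⁻¹ - b⁻¹ := by
  have hpow := integral_zpow (n := -2) (.inr ⟨by norm_num, h⟩)
  norm_num at hpow
  simpa [zpow_neg, div_neg] using hpow

lemma deriv_regularity_of_contDiffOn_two {𝕜 E : Type*} [NontriviallyNormedField 𝕜]
    [NormedAddCommGroup E] [NormedSpace 𝕜 E] {f : 𝕜 → E} {s : Set 𝕜} (hs : IsOpen s)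
    (hf : ContDiffOn 𝕜 2 f s) :
    (∀ x ∈ s, DifferentiableAt 𝕜 f x) ∧ ContinuousOn (deriv f) s ∧
      (∀ x ∈ s, DifferentiableAt 𝕜 (deriv f) x) ∧ ContinuousOn (deriv (deriv f)) s := by
  have hf' : ContDiffOn 𝕜 1 (deriv f) s := hf.deriv_of_isOpen hs (by norm_num)
  exact ⟨fun x hx ↦ (hf.differentiableOn two_ne_zero).differentiableAt (hs.mem_nhds hx),
    hf'.continuousOn,
    fun x hx ↦ hf'.differentiableOn_one.differentiableAt (hs.mem_nhds hx),
    hf'.continuousOn_deriv_of_isOpen hs le_rfl⟩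

end Calculus

section ExponentialIntegral

variable {a x : ℝ}

lemma integrableOn_exp_neg_div_Ioi (ha : 0 < a) :
    IntegrableOn (fun z ↦ exp (-z) / z) (Ioi a) := by
  refine ((integrableOn_exp_neg_Ioi a).div_const a).mono'
    (by fun_prop : Measurable fun z : ℝ ↦ exp (-z) / z).aestronglyMeasurable ?_
  filter_upwards [ae_restrict_mem measurableSet_Ioi] with z (hz : a < z)
  have hz0 : 0 < z := ha.trans hz
  rw [norm_of_nonneg (by positivity)]
  gcongr

lemma E1_nonneg (hx : 0 < x) : 0 ≤ E1 x :=
  setIntegral_nonneg measurableSet_Ioi fun _ hz ↦ div_nonneg (exp_nonneg _) (hx.trans hz).le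

lemma E1_le (hx : 0 < x) : E1 x ≤ exp (-x) / x := by
  calc E1 x ≤ ∫ z in Ioi x, exp (-z) / x := by
        refine setIntegral_mono_on (integrableOn_exp_neg_div_Ioi hx)
          ((integrableOn_exp_neg_Ioi x).div_const x) measurableSet_Ioi fun z (hz : x < z) ↦ ?_
        gcongr
    _ = exp (-x) / x := by rw [integral_div, integral_exp_neg_Ioi]

lemma hasDerivAt_E1 (hx : 0 < x) : HasDerivAt E1 (-(exp (-x) / x)) x :=
  hasDerivAt_integral_Ioi (integrableOn_exp_neg_div_Ioi (half_pos hx)) (half_lt_self hx)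
    (by fun_prop (disch := exact hx.ne'))

lemma contDiffOn_E1 : ContDiffOn ℝ ∞ E1 (Ioi 0) := by
  refine (contDiffOn_infty_iff_deriv_of_isOpen isOpen_Ioi).2
    ⟨fun x hx ↦ (hasDerivAt_E1 hx).differentiableAt.differentiableWithinAt, ?_⟩
  refine ContDiffOn.congr (f := fun x ↦ -(exp (-x) / x)) ?_ fun x hx ↦ (hasDerivAt_E1 hx).deriv
  fun_prop (disch := exact fun x hx ↦ ne_of_gt hx)

/-- The exponential integral with its exponential decay factored out, `h x = e ^ x * E1 x`. -/
noncomputable def scaledE1 (x : ℝ) : ℝ := exp x * E1 x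

lemma scaledE1_nonneg (hx : 0 < x) : 0 ≤ scaledE1 x :=
  mul_nonneg (exp_nonneg x) (E1_nonneg hx)

lemma scaledE1_le (hx : 0 < x) : scaledE1 x ≤ x⁻¹ := by
  calc exp x * E1 x ≤ exp x * (exp (-x) / x) := by gcongr; exact E1_le hx
    _ = x⁻¹ := by rw [← mul_div_assoc, ← exp_add, add_neg_cancel, exp_zero, one_div]

lemma hasDerivAt_scaledE1 (hx : 0 < x) : HasDerivAt scaledE1 (scaledE1 x - x⁻¹) x := by
  refine ((hasDerivAt_exp x).mul (hasDerivAt_E1 hx)).congr_deriv ?_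
  rw [scaledE1, exp_neg]
  field_simp
  ring

lemma contDiffOn_scaledE1 : ContDiffOn ℝ ∞ scaledE1 (Ioi 0) :=
  contDiff_exp.contDiffOn.mul contDiffOn_E1

lemma hasDerivAt_id_mul_scaledE1 (hx : 0 < x) :
    HasDerivAt (fun y ↦ y * scaledE1 y) (scaledE1 x + x * scaledE1 x - 1) x := by
  refine ((hasDerivAt_id x).mul (hasDerivAt_scaledE1 hx)).congr_deriv ?_
  simp only [id_eq]
  field_simp
  ring

lemma continuousOn_scaledE1_div : ContinuousOn (fun x ↦ scaledE1 x / x) (Ioi 0) :=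
  contDiffOn_scaledE1.continuousOn.div continuousOn_id fun _ hx ↦ ne_of_gt hx

lemma abs_integral_scaledE1_div_le {b : ℝ} (ha : 0 < a) (hab : a ≤ b) :
    |∫ x in a..b, scaledE1 x / x| ≤ a⁻¹ - b⁻¹ := by
  have hzero : (0 : ℝ) ∉ uIcc a b := notMem_uIcc_of_lt ha (ha.trans_le hab)
  have hint : IntervalIntegrable (fun x : ℝ ↦ (x ^ 2)⁻¹) volume a b :=
    ((continuousOn_pow 2).inv₀ fun _ hx ↦
      pow_ne_zero 2 (ne_of_mem_of_not_mem hx hzero)).intervalIntegrable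
  rw [← integral_inv_sq hzero, ← norm_eq_abs]
  refine intervalIntegral.norm_integral_le_of_norm_le hab (ae_of_all _ fun x hx ↦ ?_) hint
  have hx : 0 < x := ha.trans hx.1
  rw [norm_of_nonneg (div_nonneg (scaledE1_nonneg hx) hx.le)]
  calc scaledE1 x / x ≤ x⁻¹ / x := by gcongr; exact scaledE1_le hx
    _ = (x ^ 2)⁻¹ := by ring

end ExponentialIntegral

section Solution

/-- The solution of `f' + R² f'' = h (1 / R) - κ` with `f A = 0` that stays bounded near `0`, where
`h = scaledE1`. The function `f_0` of the paper is the case `κ = h (1 / r*)`. -/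
noncomputable def boundedSolution (κ A R : ℝ) : ℝ :=
  (1 - κ) * (R - A) + ∫ x in (1 / A)..(1 / R), scaledE1 x / x

variable {κ A R : ℝ}

lemma hasDerivAt_boundedSolution (hA : 0 < A) (hR : 0 < R) :
    HasDerivAt (boundedSolution κ A) (1 - κ - 1 / R * scaledE1 (1 / R)) R := by
  have hlin : HasDerivAt (fun y ↦ (1 - κ) * (y - A)) ((1 - κ) * 1) R :=
    ((hasDerivAt_id R).sub_const A).const_mul (1 - κ)
  have hint := hasDerivAt_comp_one_div hR.ne' <| hasDerivAt_integral_of_continuousOn isOpen_Ioi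
    ordConnected_Ioi continuousOn_scaledE1_div (one_div_pos.2 hA) (one_div_pos.2 hR)
  refine (hlin.add hint).congr_deriv ?_
  rw [smul_eq_mul]
  field_simp
  ring

lemma deriv_boundedSolution_eqOn (hA : 0 < A) :
    EqOn (deriv (boundedSolution κ A)) (fun R ↦ 1 - κ - 1 / R * scaledE1 (1 / R)) (Ioi 0) :=
  fun _ hR ↦ (hasDerivAt_boundedSolution hA hR).deriv

lemma hasDerivAt_deriv_boundedSolution (hA : 0 < A) (hR : 0 < R) :
    HasDerivAt (deriv (boundedSolution κ A))
      ((R ^ 2)⁻¹ * (scaledE1 (1 / R) + 1 / R * scaledE1 (1 / R) - 1)) R := by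
  have hcomp := hasDerivAt_comp_one_div hR.ne' (hasDerivAt_id_mul_scaledE1 (one_div_pos.2 hR))
  refine ((hcomp.const_sub (1 - κ)).congr_of_eventuallyEq <|
    (deriv_boundedSolution_eqOn hA).eventuallyEq_of_mem (Ioi_mem_nhds hR)).congr_deriv ?_
  rw [smul_eq_mul, neg_mul, neg_neg]

lemma contDiffOn_boundedSolution (hA : 0 < A) :
    ContDiffOn ℝ ∞ (boundedSolution κ A) (Ioi 0) := by
  refine (contDiffOn_infty_iff_deriv_of_isOpen isOpen_Ioi).2
    ⟨fun R hR ↦ (hasDerivAt_boundedSolution hA hR).differentiableAt.differentiableWithinAt, ?_⟩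
  have hinv : ContDiffOn ℝ ∞ (fun R : ℝ ↦ 1 / R) (Ioi 0) :=
    contDiffOn_const.div contDiffOn_id fun _ hR ↦ ne_of_gt hR
  have hcomp : ContDiffOn ℝ ∞ (fun R ↦ scaledE1 (1 / R)) (Ioi 0) :=
    contDiffOn_scaledE1.comp hinv fun _ (hR : 0 < _) ↦ mem_Ioi.2 (one_div_pos.2 hR)
  exact (contDiffOn_const.sub (hinv.mul hcomp)).congr (deriv_boundedSolution_eqOn hA)

lemma boundedSolution_ode (hA : 0 < A) (hR : 0 < R) :
    deriv (boundedSolution κ A) R + R ^ 2 * deriv (deriv (boundedSolution κ A)) R =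
      scaledE1 (1 / R) - κ := by
  rw [(hasDerivAt_boundedSolution hA hR).deriv, (hasDerivAt_deriv_boundedSolution hA hR).deriv,
    mul_inv_cancel_left₀ (pow_ne_zero 2 hR.ne')]
  ring

lemma boundedSolution_self : boundedSolution κ A A = 0 := by
  simp [boundedSolution]

lemma abs_boundedSolution_le (hR : 0 < R) (hRA : R ≤ A) :
    |boundedSolution κ A R| ≤ (|1 - κ| + 1) * (A - R) := by
  have hlin : |(1 - κ) * (R - A)| = |1 - κ| * (A - R) := by
    rw [abs_mul, abs_sub_comm R, abs_of_nonneg (sub_nonneg.2 hRA)]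
  have hint : |∫ x in (1 / A)..(1 / R), scaledE1 x / x| ≤ A - R := by
    simpa using abs_integral_scaledE1_div_le (one_div_pos.2 (hR.trans_le hRA))
      (one_div_le_one_div_of_le hR hRA)
  calc |boundedSolution κ A R|
      ≤ |(1 - κ) * (R - A)| + |∫ x in (1 / A)..(1 / R), scaledE1 x / x| := abs_add_le _ _
    _ ≤ |1 - κ| * (A - R) + (A - R) := add_le_add hlin.le hint
    _ = (|1 - κ| + 1) * (A - R) := by ring

end Solution

theorem statement8_general {A : ℝ} (hA : 0 < A) (κ : ℝ) :
    ContDiffOn ℝ ∞ (boundedSolution κ A) (Ioi 0) ∧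
    (∀ R ∈ Ioi 0, deriv (boundedSolution κ A) R + R ^ 2 * deriv (deriv (boundedSolution κ A)) R =
      scaledE1 (1 / R) - κ) ∧
    boundedSolution κ A A = 0 ∧
    ∀ R ∈ Ioc 0 A, |boundedSolution κ A R| ≤ (|1 - κ| + 1) * (A - R) :=
  ⟨contDiffOn_boundedSolution hA, fun _ hR ↦ boundedSolution_ode hA hR, boundedSolution_self,
    fun _ hR ↦ abs_boundedSolution_le hR.1 hR.2⟩

/-- The explicit function
`f_0(R) = (1 - e^{1/r*} E1(1/r*))(R - A) + ∫_{1/A}^{1/R} E1(x) e^x/x dx`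
is twice continuously differentiable on `(0, A)`, solves
`f_0'(R) + R² f_0''(R) = e^{1/R} E1(1/R) - e^{1/r*} E1(1/r*)` there, satisfies
`f_0(A) = 0`, and is bounded on `(0, A]`. -/
theorem statement8 (rstar A : ℝ) (hrstar : 0 < rstar) (hrA : rstar < A)
    (f0 : ℝ → ℝ)
    (hf0 : ∀ R : ℝ, f0 R =
      (1 - Real.exp (1 / rstar) * E1 (1 / rstar)) * (R - A) +
        ∫ x in (1 / A)..(1 / R), E1 x * (Real.exp x / x)) :
    (∀ R ∈ Set.Ioo (0:ℝ) A, DifferentiableAt ℝ f0 R) ∧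
    ContinuousOn (deriv f0) (Set.Ioo (0:ℝ) A) ∧
    (∀ R ∈ Set.Ioo (0:ℝ) A, DifferentiableAt ℝ (deriv f0) R) ∧
    ContinuousOn (deriv (deriv f0)) (Set.Ioo (0:ℝ) A) ∧
    (∀ R ∈ Set.Ioo (0:ℝ) A,
      deriv f0 R + R ^ 2 * deriv (deriv f0) R =
        Real.exp (1 / R) * E1 (1 / R) - Real.exp (1 / rstar) * E1 (1 / rstar)) ∧
    f0 A = 0 ∧
    (∃ C : ℝ, ∀ R ∈ Set.Ioc (0:ℝ) A, |f0 R| ≤ C) := by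
  obtain rfl : f0 = boundedSolution (scaledE1 (1 / rstar)) A := by
    ext R
    simp only [hf0, boundedSolution, scaledE1, mul_div_left_comm, mul_div_assoc]
  obtain ⟨hsmooth, hode, hbdry, hbound⟩ :=
    statement8_general (hrstar.trans hrA) (scaledE1 (1 / rstar))
  obtain ⟨hdiff, hcont, hdiff', hcont'⟩ := deriv_regularity_of_contDiffOn_two isOpen_Ioo <|
    (hsmooth.mono Ioo_subset_Ioi_self).of_le (by norm_cast)
  exact ⟨hdiff, hcont, hdiff', hcont', fun R hR ↦ hode R hR.1, hbdry,
    (|1 - scaledE1 (1 / rstar)| + 1) * A, fun R hR ↦ (hbound R hR).trans <|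
      mul_le_mul_of_nonneg_left (sub_le_self A hR.1.le) (by positivity)⟩
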